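/- Let S be a Cu-semigroup, and let B ⊆ S be a subset that is order-hereditary (y ≤ x and x ∈ B imply y ∈ B) and closed under suprema of increasing sequences. Define B_≪ = { x ∈ S : there exists y ∈ B with x ≪ y }. If B_≪ is upward directed, then B is upward directed. -/

import Mathlib

/-- The way-below (compact containment) relation on a partially ordered set:
`WayBelow x y` holds if whenever `(y n)` is an increasing sequence admitting a
supremum `s` with `y ≤ s`, then `x ≤ y n` for some `n`. -/
def WayBelow {S : Type*} [PartialOrder S] (x y : S) : Prop :=
  ∀ f : ℕ → S, Monotone f → ∀ s : S, IsLUB (Set.range f) s → y ≤ s → ∃ n, x ≤ f n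

/-- An abstract Cuntz semigroup (Cu-semigroup): a positively ordered commutative
monoid satisfying the axioms (O1)-(O4). -/
class CuSemigroup (S : Type*) [AddCommMonoid S] [PartialOrder S] : Prop where
  /-- The order is positive. -/
  zero_le : ∀ x : S, 0 ≤ x
  /-- Addition is order-preserving. -/
  add_le_add : ∀ {x y z w : S}, x ≤ y → z ≤ w → x + z ≤ y + w
  /-- (O1): every increasing sequence has a supremum. -/
  O1 : ∀ f : ℕ → S, Monotone f → ∃ s : S, IsLUB (Set.range f) s
  /-- (O2): every element is the supremum of a `≪`-increasing sequence. -/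
  O2 : ∀ x : S, ∃ f : ℕ → S, (∀ n, WayBelow (f n) (f (n + 1))) ∧ IsLUB (Set.range f) x
  /-- (O3): the way-below relation is additive. -/
  O3 : ∀ {x' x y' y : S}, WayBelow x' x → WayBelow y' y → WayBelow (x' + y') (x + y)
  /-- (O4): addition is compatible with suprema of increasing sequences. -/
  O4 : ∀ (f g : ℕ → S), Monotone f → Monotone g → ∀ a b : S,
        IsLUB (Set.range f) a → IsLUB (Set.range g) b →
        IsLUB (Set.range fun n => f n + g n) (a + b)

/-- Axiom (O5) (almost algebraic order). -/
def O5 (S : Type*) [AddCommMonoid S] [PartialOrder S] : Prop :=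
  ∀ x' x z : S, WayBelow x' x → x ≤ z → ∃ w : S, x' + w ≤ z ∧ z ≤ x + w

/-- Axiom (O6+). -/
def O6plus (S : Type*) [AddCommMonoid S] [PartialOrder S] : Prop :=
  ∀ a b c x' x y' y : S, a ≤ b + c →
    WayBelow x' x → x ≤ a → x ≤ b → WayBelow y' y → y ≤ a → y ≤ c →
    ∃ e f : S, a ≤ e + f ∧ WayBelow x' e ∧ e ≤ a ∧ e ≤ b ∧
      WayBelow y' f ∧ f ≤ a ∧ f ≤ c

/-- Weak cancellation: `x + z ≪ y + z` implies `x ≪ y`. -/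
def WeakCancel (S : Type*) [AddCommMonoid S] [PartialOrder S] : Prop :=
  ∀ x y z : S, WayBelow (x + z) (y + z) → WayBelow x y

/-- A Cu-semigroup is countably based if there is a countable subset `B` such that every
element is the supremum of a `≪`-increasing sequence with elements in `B`. -/
def CountablyBased (S : Type*) [AddCommMonoid S] [PartialOrder S] : Prop :=
  ∃ B : Set S, B.Countable ∧ ∀ x : S, ∃ f : ℕ → S, (∀ n, f n ∈ B) ∧
    (∀ n, WayBelow (f n) (f (n + 1))) ∧ IsLUB (Set.range f) x

/-- Addition distributes over the infimum operation. -/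
def InfDistrib (S : Type*) [AddCommMonoid S] [SemilatticeInf S] : Prop :=
  ∀ x y z : S, (x + z) ⊓ (y + z) = (x ⊓ y) + z

/-- A functional on an ordered monoid: a `[0,∞]`-valued map preserving `0`, addition,
order, and suprema of increasing sequences. -/
def IsFunctional {S : Type*} [AddCommMonoid S] [PartialOrder S] (l : S → ENNReal) : Prop :=
  l 0 = 0 ∧ (∀ x y : S, l (x + y) = l x + l y) ∧ (∀ x y : S, x ≤ y → l x ≤ l y) ∧
    ∀ (f : ℕ → S) (s : S), Monotone f → IsLUB (Set.range f) s → l s = ⨆ n, l (f n)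

/-- An element is soft if each of its way-below approximants `x'` satisfies
`(k+1)·x' ≤ k·x` for some `k`. -/
def Soft {S : Type*} [AddCommMonoid S] [PartialOrder S] (x : S) : Prop :=
  ∀ x' : S, WayBelow x' x → ∃ k : ℕ, (k + 1) • x' ≤ k • x

/-- An element `x` is full if `∞·x = sup_n n·x` exists and dominates every element. -/
def IsFull {S : Type*} [AddCommMonoid S] [PartialOrder S] (x : S) : Prop :=
  ∃ s : S, IsLUB (Set.range fun n : ℕ => n • x) s ∧ ∀ t : S, t ≤ s

theorem exists_monotone_ge {α : Type*} [Preorder α] [IsDirectedOrder α] (u : ℕ → α) :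
    ∃ v : ℕ → α, Monotone v ∧ ∀ n, u n ≤ v n := by
  choose next le_next seq_le_next using fun (n : ℕ) (a : α) => exists_ge_ge a (u n)
  let v : ℕ → α := Nat.rec (u 0) fun n a => next (n + 1) a
  refine ⟨v, monotone_nat_of_le_succ fun n => le_next (n + 1) (v n), fun n => ?_⟩
  cases n with
  | zero => exact le_rfl
  | succ n => exact seq_le_next (n + 1) (v n)

theorem directedOn_of_forall_isLUB_range {α : Type*} [Preorder α] {B D : Set α}
    (hD : DirectedOn (· ≤ ·) D)
    (hbdd : ∀ f : ℕ → α, Monotone f → (∀ n, f n ∈ D) → ∃ s ∈ B, ∀ n, f n ≤ s)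
    (happrox : ∀ x ∈ B, ∃ f : ℕ → α, (∀ n, f n ∈ D) ∧ IsLUB (Set.range f) x) :
    DirectedOn (· ≤ ·) B := by
  intro x hx y hy
  obtain ⟨f, hfD, hfx⟩ := happrox x hx
  obtain ⟨g, hgD, hgy⟩ := happrox y hy
  choose u huD hfu hgu using fun n => hD (f n) (hfD n) (g n) (hgD n)
  have : IsDirectedOrder D := hD.isDirectedOrder
  obtain ⟨v, hv, huv⟩ := exists_monotone_ge fun n => (⟨u n, huD n⟩ : D)
  obtain ⟨s, hsB, hvs⟩ := hbdd (fun n => v n) hv fun n => (v n).2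
  have hus (n : ℕ) : u n ≤ s := le_trans (huv n) (hvs n)
  have hxs : x ≤ s := hfx.2 (Set.forall_mem_range.mpr fun n => (hfu n).trans (hus n))
  have hys : y ≤ s := hgy.2 (Set.forall_mem_range.mpr fun n => (hgu n).trans (hus n))
  exact ⟨s, hsB, hxs, hys⟩

namespace WayBelow

variable {P : Type*} [PartialOrder P] {x y z : P}

protected theorem le (h : WayBelow x y) : x ≤ y := by
  have hlub : IsLUB (Set.range fun _ : ℕ => y) y := by
    rw [Set.range_const]
    exact isLUB_singleton
  obtain ⟨_, hxy⟩ := h (fun _ => y) monotone_const y hlub le_rfl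
  exact hxy

theorem trans_le (hxy : WayBelow x y) (hyz : y ≤ z) : WayBelow x z :=
  fun f hf s hs hzs => hxy f hf s hs (hyz.trans hzs)

end WayBelow

theorem directedOn_of_directedOn_wayBelow_general {P : Type*} [PartialOrder P] {B : Set P}
    (hlower : IsLowerSet B)
    (hbdd : ∀ f : ℕ → P, Monotone f → (∀ n, f n ∈ B) → ∃ s ∈ B, ∀ n, f n ≤ s)
    (happrox : ∀ x ∈ B, ∃ f : ℕ → P, (∀ n, WayBelow (f n) x) ∧ IsLUB (Set.range f) x)
    (hdir : DirectedOn (· ≤ ·) {x : P | ∃ y ∈ B, WayBelow x y}) :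
    DirectedOn (· ≤ ·) B := by
  refine directedOn_of_forall_isLUB_range hdir (fun f hf hfD => hbdd f hf fun n => ?_)
    fun x hx => ?_
  · obtain ⟨y, hy, hfy⟩ := hfD n
    exact hlower hfy.le hy
  · obtain ⟨f, hfx, hlub⟩ := happrox x hx
    exact ⟨f, fun n => ⟨x, hx, hfx n⟩, hlub⟩

theorem CuSemigroup.exists_forall_wayBelow_isLUB_range {S : Type*} [AddCommMonoid S]
    [PartialOrder S] [CuSemigroup S] (x : S) :
    ∃ f : ℕ → S, (∀ n, WayBelow (f n) x) ∧ IsLUB (Set.range f) x := by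
  obtain ⟨f, hf, hlub⟩ := CuSemigroup.O2 x
  exact ⟨f, fun n => (hf n).trans_le (hlub.1 (Set.mem_range_self (n + 1))), hlub⟩

/-- If `B` is an order-hereditary subset of a Cu-semigroup that is closed under suprema
of increasing sequences, and the set `B_≪` of elements way-below some element of `B` is
upward directed, then `B` is upward directed. -/
theorem directedOn_of_directedOn_wayBelow {S : Type*} [AddCommMonoid S] [PartialOrder S]
    [CuSemigroup S] (B : Set S)
    (hhered : ∀ x y : S, y ≤ x → x ∈ B → y ∈ B)
    (hsup : ∀ f : ℕ → S, Monotone f → (∀ n, f n ∈ B) →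
      ∀ s : S, IsLUB (Set.range f) s → s ∈ B)
    (hdir : DirectedOn (· ≤ ·) {x : S | ∃ y ∈ B, WayBelow x y}) :
    DirectedOn (· ≤ ·) B := by
  exact directedOn_of_directedOn_wayBelow_general hhered
    (fun f hf hfB => (CuSemigroup.O1 f hf).imp fun s hs =>
      ⟨hsup f hf hfB s hs, fun n => hs.1 (Set.mem_range_self n)⟩)
    (fun x _ => CuSemigroup.exists_forall_wayBelow_isLUB_range x) hdir
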